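/- Let Ω be a program with weight constraints and let Π₁ be the set of rules l ← not not l, [C₁],…,[C_n] for every rule C₀ ← C₁,…,C_n of Ω and every positive rule element l of C₀. Then for any consistent sets Z and Z' of literals, Z' ⊨ Ω^Z if and only if Z' ⊨ Π₁^Z. -/

import Mathlib

open Classical

/-- A literal: a propositional atom `a` or its classical negation `¬ a`. -/
inductive Lit (α : Type) where
  | pos : α → Lit α
  | neg : α → Lit α

/-- The atom of a literal. -/
def Lit.atom {α : Type} : Lit α → α
  | .pos a => a
  | .neg a => a

/-- Mapping literals along a map of atoms. -/
def Lit.map {α β : Type} (f : α → β) : Lit α → Lit β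
  | .pos a => .pos (f a)
  | .neg a => .neg (f a)

/-- A set of literals is consistent if it contains no pair `a`, `¬ a`. -/
def LitConsistent {α : Type} (Z : Set (Lit α)) : Prop :=
  ∀ a : α, ¬(Lit.pos a ∈ Z ∧ Lit.neg a ∈ Z)

/-- Formulas (nested expressions): elementary formulas are literals, `⊥` and `⊤`;
formulas are built from them using negation as failure `naf`, conjunction `conj`
and disjunction `disj`. -/
inductive Formula (α : Type) where
  | lit : Lit α → Formula α
  | fbot : Formula α
  | ftop : Formula α
  | naf : Formula α → Formula α
  | conj : Formula α → Formula α → Formula α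
  | disj : Formula α → Formula α → Formula α

/-- Satisfaction of a formula by a set of literals. -/
def Formula.sat {α : Type} (Z : Set (Lit α)) : Formula α → Prop
  | .lit l => l ∈ Z
  | .fbot => False
  | .ftop => True
  | .naf F => ¬ F.sat Z
  | .conj F G => F.sat Z ∧ G.sat Z
  | .disj F G => F.sat Z ∨ G.sat Z

/-- A rule with nested expressions: `head ← body`. -/
structure NRule (α : Type) where
  head : Formula α
  body : Formula α

/-- `Z` satisfies a program (a set of rules). -/
def progSat {α : Type} (Z : Set (Lit α)) (P : Set (NRule α)) : Prop :=
  ∀ r ∈ P, r.body.sat Z → r.head.sat Z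

/-- The reduct `F^Z` of a formula relative to a set of literals `Z`. -/
noncomputable def Formula.reduct {α : Type} (Z : Set (Lit α)) : Formula α → Formula α
  | .lit l => .lit l
  | .fbot => .fbot
  | .ftop => .ftop
  | .naf F => if F.sat Z then .fbot else .ftop
  | .conj F G => .conj (F.reduct Z) (G.reduct Z)
  | .disj F G => .disj (F.reduct Z) (G.reduct Z)

/-- The reduct `Π^Z` of a program. -/
noncomputable def progReduct {α : Type} (Z : Set (Lit α)) (P : Set (NRule α)) : Set (NRule α) :=
  (fun r : NRule α => NRule.mk (r.head.reduct Z) (r.body.reduct Z)) '' P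

/-- `Z` is minimal (under inclusion) among the consistent sets of literals satisfying `P`. -/
def MinimalSat {α : Type} (Z : Set (Lit α)) (P : Set (NRule α)) : Prop :=
  LitConsistent Z ∧ progSat Z P ∧
    ∀ Z' : Set (Lit α), LitConsistent Z' → progSat Z' P → Z' ⊆ Z → Z' = Z

/-- `Z` is an answer set for a program `P` with nested expressions:
`Z` is minimal among the consistent sets satisfying the reduct `P^Z`. -/
def AnswerSet {α : Type} (Z : Set (Lit α)) (P : Set (NRule α)) : Prop :=
  MinimalSat Z (progReduct Z P)

/-- Strong equivalence of programs with nested expressions. -/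
def StrongEq {α : Type} (P₁ P₂ : Set (NRule α)) : Prop :=
  ∀ P : Set (NRule α), ∀ Z : Set (Lit α), AnswerSet Z (P₁ ∪ P) ↔ AnswerSet Z (P₂ ∪ P)

/-- Multiple conjunction (the empty conjunction is `⊤`). -/
def bigConj {α : Type} : List (Formula α) → Formula α
  | [] => .ftop
  | F :: Fs => .conj F (bigConj Fs)

/-- Multiple disjunction (the empty disjunction is `⊥`). -/
def bigDisj {α : Type} : List (Formula α) → Formula α
  | [] => .fbot
  | F :: Fs => .disj F (bigDisj Fs)

/-- `⟨F₁,…,F_n⟩:X`: the disjunction over `I ∈ X` of the conjunctions of the `Fᵢ`, `i ∈ I`. -/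
noncomputable def angled {α : Type} {n : ℕ} (F : Fin n → Formula α) (X : Finset (Finset (Fin n))) :
    Formula α :=
  bigDisj (X.toList.map fun I => bigConj (I.toList.map F))
/-- A rule element: a literal (positive rule element) or a literal
prefixed with negation as failure (negative rule element). -/
inductive RElem (α : Type) where
  | pos : Lit α → RElem α
  | neg : Lit α → RElem α

/-- Satisfaction of a rule element by a set of literals. -/
def RElem.sat {α : Type} (Z : Set (Lit α)) : RElem α → Prop
  | .pos l => l ∈ Z
  | .neg l => l ∉ Z

/-- Whether a rule element is negative. -/
def RElem.isNegB {α : Type} : RElem α → Bool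
  | .pos _ => false
  | .neg _ => true

/-- The sum of the weights of the entries of `S` that are satisfied by `Z`. -/
noncomputable def weightSum {α : Type} (Z : Set (Lit α)) (S : List (RElem α × ℝ)) : ℝ :=
  (S.map fun p => if p.1.sat Z then p.2 else 0).sum

/-- A weight constraint `L ≤ {c₁=w₁,…,c_m=w_m} ≤ U` with nonnegative weights;
`L` and `U` may be `−∞`/`+∞`. -/
structure WConstraint (α : Type) where
  L : EReal
  S : List (RElem α × ℝ)
  U : EReal
  nonneg : ∀ p ∈ S, (0 : ℝ) ≤ p.2

/-- `Z` satisfies the weight constraint `L ≤ S ≤ U`. -/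
def WConstraint.sat {α : Type} (Z : Set (Lit α)) (C : WConstraint α) : Prop :=
  C.L ≤ (weightSum Z C.S : EReal) ∧ (weightSum Z C.S : EReal) ≤ C.U

/-- A rule with weight constraints, `C₀ ← C₁,…,C_n`. -/
structure WRule (α : Type) where
  head : WConstraint α
  body : List (WConstraint α)

/-- `Z` satisfies a program with weight constraints. -/
def wProgSat {α : Type} (Z : Set (Lit α)) (Ω : Set (WRule α)) : Prop :=
  ∀ R ∈ Ω, (∀ C ∈ R.body, C.sat Z) → R.head.sat Z

/-- A weight constraint of the form `L ≤ S` (no upper bound), with nonnegative weights. -/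
structure LConstraint (α : Type) where
  L : EReal
  S : List (RElem α × ℝ)
  nonneg : ∀ p ∈ S, (0 : ℝ) ≤ p.2

/-- Satisfaction of a lower-bound constraint (by an arbitrary set of literals). -/
def LConstraint.sat {α : Type} (Z : Set (Lit α)) (C : LConstraint α) : Prop :=
  C.L ≤ (weightSum Z C.S : EReal)

/-- A Horn rule: a literal as head, lower-bound constraints as body. -/
structure HornRule (α : Type) where
  head : Lit α
  body : List (LConstraint α)

/-- Satisfaction of a set of Horn rules by an arbitrary set of literals. -/
def hornSat {α : Type} (Z : Set (Lit α)) (P : Set (HornRule α)) : Prop :=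
  ∀ r ∈ P, (∀ C ∈ r.body, C.sat Z) → r.head ∈ Z

/-- The deductive closure of a set of Horn rules: its unique minimal satisfying
set of literals (the intersection of all satisfying sets). -/
def cl {α : Type} (P : Set (HornRule α)) : Set (Lit α) :=
  ⋂₀ {Z : Set (Lit α) | hornSat Z P}

/-- The sum of the weights of the negative entries of `S` satisfied by `Z`. -/
noncomputable def negSatWeight {α : Type} (Z : Set (Lit α)) (S : List (RElem α × ℝ)) : ℝ :=
  (S.map fun p => if p.1.isNegB = true ∧ p.1.sat Z then p.2 else 0).sum

/-- The reduct `(L ≤ S)^Z` of a lower-bound constraint: drop the negative entries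
of `S` and decrease `L` by the total weight of the negative entries satisfied by `Z`. -/
noncomputable def LConstraint.reduct {α : Type} (Z : Set (Lit α)) (C : LConstraint α) :
    LConstraint α :=
  ⟨C.L - ((negSatWeight Z C.S : ℝ) : EReal),
   C.S.filter (fun p => !p.1.isNegB),
   fun p hp => C.nonneg p (List.mem_of_mem_filter hp)⟩

/-- The lower-bound part `L ≤ S` of a weight constraint `L ≤ S ≤ U`. -/
def WConstraint.lower {α : Type} (C : WConstraint α) : LConstraint α :=
  ⟨C.L, C.S, C.nonneg⟩

/-- The positive rule elements (as literals) occurring in `S`. -/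
def posElems {α : Type} (S : List (RElem α × ℝ)) : Set (Lit α) :=
  {l : Lit α | ∃ w : ℝ, (RElem.pos l, w) ∈ S}

/-- The reduct `Ω^Z` of a program with weight constraints: for each rule
`L₀≤S₀≤U₀ ← C₁,…,C_n` whose upper bounds are all satisfied by `Z`, the Horn rules
`l ← C₁^Z,…,C_n^Z` for all positive rule elements `l` of `S₀` with `l ∈ Z`. -/
noncomputable def wProgReduct {α : Type} (Z : Set (Lit α)) (Ω : Set (WRule α)) :
    Set (HornRule α) :=
  { r : HornRule α | ∃ R ∈ Ω,
      (∀ C ∈ R.body, (weightSum Z C.S : EReal) ≤ C.U) ∧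
      r.head ∈ posElems R.head.S ∧ r.head ∈ Z ∧
      r.body = R.body.map (fun C => C.lower.reduct Z) }

/-- `Z` is an answer set for the program `Ω` with weight constraints. -/
def WAnswerSet {α : Type} (Z : Set (Lit α)) (Ω : Set (WRule α)) : Prop :=
  LitConsistent Z ∧ wProgSat Z Ω ∧ cl (wProgReduct Z Ω) = Z

/-- Strong equivalence of programs with weight constraints. -/
def WStrongEq {α : Type} (Ω₁ Ω₂ : Set (WRule α)) : Prop :=
  ∀ Ω : Set (WRule α), ∀ Z : Set (Lit α), WAnswerSet Z (Ω₁ ∪ Ω) ↔ WAnswerSet Z (Ω₂ ∪ Ω)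

/-- A rule element as a formula: `l` becomes the literal `l`, `not l` becomes `naf l`. -/
def RElem.toFormula {α : Type} : RElem α → Formula α
  | .pos l => .lit l
  | .neg l => .naf (.lit l)

/-- The translation `[L ≤ S]`: the formula `⟨c₁,…,c_m⟩:{I : L ≤ Σ_{i∈I} wᵢ}`. -/
noncomputable def trLower {α : Type} (L : EReal) (S : List (RElem α × ℝ)) : Formula α :=
  angled (fun i : Fin S.length => (S.get i).1.toFormula)
    (Finset.univ.filter fun I : Finset (Fin S.length) =>
      L ≤ ((∑ i ∈ I, (S.get i).2 : ℝ) : EReal))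

/-- The translation `[S ≤ U]`: the formula `not ⟨c₁,…,c_m⟩:{I : U < Σ_{i∈I} wᵢ}`. -/
noncomputable def trUpper {α : Type} (S : List (RElem α × ℝ)) (U : EReal) : Formula α :=
  .naf (angled (fun i : Fin S.length => (S.get i).1.toFormula)
    (Finset.univ.filter fun I : Finset (Fin S.length) =>
      U < ((∑ i ∈ I, (S.get i).2 : ℝ) : EReal)))

/-- The translation `[L ≤ S ≤ U] = [L ≤ S],[S ≤ U]`. -/
noncomputable def trWC {α : Type} (C : WConstraint α) : Formula α :=
  .conj (trLower C.L C.S) (trUpper C.S C.U)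

/-- The formulas `l ; not l` for the positive rule elements `l` of `S`, in order. -/
def choiceFmls {α : Type} (S : List (RElem α × ℝ)) : List (Formula α) :=
  S.filterMap fun p =>
    match p.1 with
    | RElem.pos l => some (Formula.disj (.lit l) (.naf (.lit l)))
    | RElem.neg _ => none

/-- The translation of a rule with weight constraints `C₀ ← C₁,…,C_n`:
`(l₁; not l₁),…,(l_p; not l_p),[C₀] ← [C₁],…,[C_n]`. -/
noncomputable def trRule {α : Type} (R : WRule α) : NRule α :=
  ⟨bigConj (choiceFmls R.head.S ++ [trWC R.head]), bigConj (R.body.map trWC)⟩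

/-- The translation `[Ω]` of a program with weight constraints. -/
noncomputable def trProg {α : Type} (Ω : Set (WRule α)) : Set (NRule α) :=
  trRule '' Ω

/-- The nondisjunctive translation `[Ω]^{nd}`: each rule `C₀ ← C₁,…,C_n` is replaced
by the rules `l ← not not l, [C₁],…,[C_n]` for all positive rule elements `l` of `C₀`
together with `⊥ ← not [C₀], [C₁],…,[C_n]`. -/
noncomputable def ndTrans {α : Type} (Ω : Set (WRule α)) : Set (NRule α) :=
  { r : NRule α | ∃ R ∈ Ω,
      (∃ l ∈ posElems R.head.S,
        r = ⟨.lit l, bigConj (.naf (.naf (.lit l)) :: R.body.map trWC)⟩) ∨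
      r = ⟨.fbot, bigConj (.naf (trWC R.head) :: R.body.map trWC)⟩ }

/-- `Π₁`: the rules `l ← not not l, [C₁],…,[C_n]` for all rules `C₀ ← C₁,…,C_n` of `Ω`
and all positive rule elements `l` of `C₀`. -/
noncomputable def choicePart {α : Type} (Ω : Set (WRule α)) : Set (NRule α) :=
  { r : NRule α | ∃ R ∈ Ω, ∃ l ∈ posElems R.head.S,
      r = ⟨.lit l, bigConj (.naf (.naf (.lit l)) :: R.body.map trWC)⟩ }

/-!
The rule `l ← not not l, [C₁], …, [Cₙ]` reduces relative to `Z` to a rule that `Z'` satisfies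
vacuously when `l ∉ Z`, since `not not l` is decided by `Z` alone. When `l ∈ Z`, it says the same as
the Horn rule `l ← C₁^Z, …, Cₙ^Z`, provided each `[C]^Z` has the right meaning for `Z'`. As the
weights are nonnegative, the index sets `I` allowed in `⟨c₁, …, c_m⟩ : X` form an upper set, so the
formula holds iff the set of all `i` whose `cᵢ` holds belongs to `X`: it compares the total weight
of the satisfied `cᵢ` with the bound. For `[S ≤ U]`, which is negated, satisfaction refers to `Z`.
For `[L ≤ S]^Z`, positive elements are evaluated in `Z'` and negative ones in `Z`, and moving the
contribution of the latter to the left-hand side gives `(L ≤ S)^Z`.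
-/

section NestedExpressions

variable {α : Type} {Z Z' : Set (Lit α)}

theorem sat_bigConj {Fs : List (Formula α)} : (bigConj Fs).sat Z ↔ ∀ F ∈ Fs, F.sat Z := by
  induction Fs with
  | nil => simp [bigConj, Formula.sat]
  | cons F Fs ih => simp [bigConj, Formula.sat, ih]

theorem sat_bigDisj {Fs : List (Formula α)} : (bigDisj Fs).sat Z ↔ ∃ F ∈ Fs, F.sat Z := by
  induction Fs with
  | nil => simp [bigDisj, Formula.sat]
  | cons F Fs ih => simp [bigDisj, Formula.sat, ih]

theorem reduct_bigConj (Fs : List (Formula α)) :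
    (bigConj Fs).reduct Z = bigConj (Fs.map (Formula.reduct Z)) := by
  induction Fs with
  | nil => rfl
  | cons F Fs ih => simp [bigConj, Formula.reduct, ih]

theorem reduct_bigDisj (Fs : List (Formula α)) :
    (bigDisj Fs).reduct Z = bigDisj (Fs.map (Formula.reduct Z)) := by
  induction Fs with
  | nil => rfl
  | cons F Fs ih => simp [bigDisj, Formula.reduct, ih]

theorem sat_reduct_naf {F : Formula α} : (F.naf.reduct Z).sat Z' ↔ ¬F.sat Z := by
  by_cases h : F.sat Z <;> simp [Formula.reduct, Formula.sat, h]

variable {n : ℕ}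

theorem sat_angled {F : Fin n → Formula α} {X : Finset (Finset (Fin n))} :
    (angled F X).sat Z ↔ ∃ I ∈ X, ∀ i ∈ I, (F i).sat Z := by
  simp [angled, sat_bigDisj, sat_bigConj]

theorem reduct_angled (F : Fin n → Formula α) (X : Finset (Finset (Fin n))) :
    (angled F X).reduct Z = angled (fun i => (F i).reduct Z) X := by
  simp [angled, reduct_bigDisj, reduct_bigConj, Function.comp_def]

theorem sat_angled_of_isUpperSet {F : Fin n → Formula α} {X : Finset (Finset (Fin n))}
    (hX : IsUpperSet (X : Set (Finset (Fin n)))) :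
    (angled F X).sat Z ↔ Finset.univ.filter (fun i => (F i).sat Z) ∈ X := by
  rw [sat_angled]
  constructor
  · rintro ⟨I, hI, hsat⟩
    exact hX (fun i hi => by simpa using hsat i hi) hI
  · exact fun h => ⟨_, h, fun i hi => (Finset.mem_filter.mp hi).2⟩

end NestedExpressions

section WeightConstraints

variable {α : Type} {Z Z' : Set (Lit α)}

theorem sum_filter_get_eq_sum_map_ite {β M : Type*} [AddCommMonoid M] (S : List (β × M))
    (q : β → Prop) :
    ∑ i : Fin S.length with q (S.get i).1, (S.get i).2 =
      (S.map fun p => if q p.1 then p.2 else 0).sum := by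
  rw [Finset.sum_filter]
  exact Fin.sum_univ_fun_getElem S fun p => if q p.1 then p.2 else 0

theorem sat_angled_iff_sum_mem {β M : Type*} [AddCommMonoid M] [PartialOrder M]
    [IsOrderedAddMonoid M] {S : List (β × M)} (hS : ∀ p ∈ S, 0 ≤ p.2) (f : β → Formula α)
    {T : Set M} (hT : IsUpperSet T) {X : Finset (Finset (Fin S.length))}
    (hX : ∀ I, I ∈ X ↔ ∑ i ∈ I, (S.get i).2 ∈ T) :
    (angled (fun i => f (S.get i).1) X).sat Z ↔
      (S.map fun p => if (f p.1).sat Z then p.2 else 0).sum ∈ T := by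
  have sum_mono : Monotone fun I : Finset (Fin S.length) => ∑ i ∈ I, (S.get i).2 :=
    Finset.sum_mono_set_of_nonneg fun i => hS _ (S.get_mem i)
  have X_upper : IsUpperSet (X : Set (Finset (Fin S.length))) := fun I J hIJ hI =>
    (hX J).2 (hT (sum_mono hIJ) ((hX I).1 hI))
  rw [sat_angled_of_isUpperSet X_upper, hX,
    sum_filter_get_eq_sum_map_ite S fun c => (f c).sat Z]

theorem RElem.sat_toFormula {c : RElem α} : c.toFormula.sat Z ↔ c.sat Z := by
  cases c <;> rfl

theorem sum_map_ite_sat_reduct_toFormula (Z Z' : Set (Lit α)) (S : List (RElem α × ℝ)) :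
    (S.map fun p => if (p.1.toFormula.reduct Z).sat Z' then p.2 else 0).sum =
      weightSum Z' (S.filter fun p => !p.1.isNegB) + negSatWeight Z S := by
  induction S with
  | nil => simp [weightSum, negSatWeight]
  | cons p S ih =>
    obtain ⟨c, w⟩ := p
    rw [List.map_cons, List.sum_cons, ih]
    cases c with
    | pos l =>
      by_cases h : l ∈ Z' <;>
        simp [weightSum, negSatWeight, RElem.toFormula, Formula.reduct, Formula.sat, RElem.isNegB,
          RElem.sat, h, add_assoc]
    | neg l =>
      simp [weightSum, negSatWeight, RElem.toFormula, sat_reduct_naf, Formula.sat, RElem.isNegB,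
        RElem.sat, add_left_comm]

theorem LConstraint.sat_reduct_iff {C : LConstraint α} :
    (C.reduct Z).sat Z' ↔
      C.L ≤ ↑(weightSum Z' (C.S.filter fun p => !p.1.isNegB) + negSatWeight Z C.S) := by
  rw [LConstraint.sat, LConstraint.reduct, EReal.sub_le_iff_le_add (by simp) (by simp),
    EReal.coe_add]

theorem sat_reduct_trLower {C : LConstraint α} :
    ((trLower C.L C.S).reduct Z).sat Z' ↔ (C.reduct Z).sat Z' := by
  have bound_upper : IsUpperSet {x : ℝ | C.L ≤ (x : EReal)} :=
    (isUpperSet_Ici C.L).preimage EReal.coe_strictMono.monotone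
  rw [trLower, reduct_angled, sat_angled_iff_sum_mem C.nonneg (fun c => c.toFormula.reduct Z)
    bound_upper (by simp), sum_map_ite_sat_reduct_toFormula, LConstraint.sat_reduct_iff,
    Set.mem_ofPred_eq]

theorem sat_reduct_trUpper {S : List (RElem α × ℝ)} (hS : ∀ p ∈ S, 0 ≤ p.2) {U : EReal} :
    ((trUpper S U).reduct Z).sat Z' ↔ (weightSum Z S : EReal) ≤ U := by
  have bound_upper : IsUpperSet {x : ℝ | U < (x : EReal)} :=
    (isUpperSet_Ioi U).preimage EReal.coe_strictMono.monotone
  rw [trUpper, sat_reduct_naf, sat_angled_iff_sum_mem hS RElem.toFormula bound_upper (by simp)]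
  simp only [RElem.sat_toFormula, Set.mem_ofPred_eq, not_lt, weightSum]

theorem sat_reduct_trWC {C : WConstraint α} :
    ((trWC C).reduct Z).sat Z' ↔
      (weightSum Z C.S : EReal) ≤ C.U ∧ (C.lower.reduct Z).sat Z' :=
  and_comm.trans (and_congr (sat_reduct_trUpper C.nonneg) (sat_reduct_trLower (C := C.lower)))

theorem sat_reduct_choicePart_body {l : Lit α} {B : List (WConstraint α)} :
    ((bigConj (.naf (.naf (.lit l)) :: B.map trWC)).reduct Z).sat Z' ↔
      l ∈ Z ∧ (∀ C ∈ B, (weightSum Z C.S : EReal) ≤ C.U) ∧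
        ∀ C ∈ B, (C.lower.reduct Z).sat Z' := by
  simp [reduct_bigConj, sat_bigConj, sat_reduct_naf, sat_reduct_trWC, Formula.sat, forall_and]

theorem sat_wReduct_iff_choicePart_general (Ω : Set (WRule α)) (Z Z' : Set (Lit α)) :
    hornSat Z' (wProgReduct Z Ω) ↔ progSat Z' (progReduct Z (choicePart Ω)) := by
  constructor
  · rintro horn _ ⟨_, ⟨R, hR, l, hl, rfl⟩, rfl⟩ body_sat
    obtain ⟨hlZ, upper, lower⟩ := sat_reduct_choicePart_body.1 body_sat
    exact horn ⟨l, R.body.map fun C => C.lower.reduct Z⟩ ⟨R, hR, upper, hl, hlZ, rfl⟩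
      (List.forall_mem_map.2 lower)
  · rintro nested ⟨l, _⟩ ⟨R, hR, upper, hl, hlZ, rfl⟩ body_sat
    exact nested _ ⟨_, ⟨R, hR, l, hl, rfl⟩, rfl⟩
      (sat_reduct_choicePart_body.2 ⟨hlZ, upper, List.forall_mem_map.1 body_sat⟩)

end WeightConstraints

/-- For any consistent sets `Z`, `Z'` of literals, `Z' ⊨ Ω^Z` iff `Z' ⊨ Π₁^Z`. -/
theorem sat_wReduct_iff_choicePart (Ω : Set (WRule ℕ)) (Z Z' : Set (Lit ℕ))
    (hZ : LitConsistent Z) (hZ' : LitConsistent Z') :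
    hornSat Z' (wProgReduct Z Ω) ↔ progSat Z' (progReduct Z (choicePart Ω)) :=
  sat_wReduct_iff_choicePart_general Ω Z Z'
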